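/- arXiv:2201.03142 — 3 statements merged into one kernel-verified Lean document; each statement's English description precedes it below -/
import Mathlib

section
/- Let G be a graph containing vertex sets J, T ⊆ V(G) with G[J] isomorphic to the claw K_{1,3}, G[T] isomorphic to the triangle K_3, and d_G(J,T) finite, and let (J*,T*) be a closest such pair (minimizing d_G(J,T) over all such pairs at finite distance). Call a set S ⊆ V(G) feasible if every connected component of G − S is K_{1,3}-free or K_3-free. Then there exists a feasible set S of minimum cardinality among all feasible sets satisfying S ∩ (J* ∪ T*) ≠ ∅. -/
open SimpleGraph

/-- `G` contains an induced subgraph isomorphic to `H`. -/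
def ContainsInduced {V W : Type*} (G : SimpleGraph V) (H : SimpleGraph W) : Prop :=
  Nonempty (H ↪g G)

/-- `d_G(P, Q)`: the minimum over `u ∈ P`, `v ∈ Q` of the shortest-path distance
from `u` to `v` in `G` (as an extended natural number, `⊤` if no path exists). -/
noncomputable def eSetDist {V : Type*} (G : SimpleGraph V) (P Q : Set V) : ℕ∞ :=
  ⨅ (u : V) (_ : u ∈ P) (v : V) (_ : v ∈ Q), G.edist u v

/-- The claw `K_{1,3}`: center `0` joined to the leaves `1`, `2`, `3`. -/
def clawGraph : SimpleGraph (Fin 4) :=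
  SimpleGraph.fromEdgeSet {s(0, 1), s(0, 2), s(0, 3)}

/-- The triangle `K_3`. -/
def triangleGraph : SimpleGraph (Fin 3) := ⊤

/-- `S` is feasible for `G`: every connected component of `G − S` is
claw-free or triangle-free. -/
def Feasible {V : Type} (G : SimpleGraph V) (S : Set V) : Prop :=
  ∀ c : (G.induce Sᶜ).ConnectedComponent,
    ¬ ContainsInduced ((G.induce Sᶜ).induce c.supp) clawGraph ∨
    ¬ ContainsInduced ((G.induce Sᶜ).induce c.supp) triangleGraph

/-!
Let `p` be a shortest walk from `J*` to `T*`. By the choice of `(J*, T*)` it is shortest among all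
walks from a claw to a triangle, so no interior vertex of `p` lies in a claw or a triangle; in
particular such a vertex has no neighbours other than its two neighbours on `p`. If a minimum
feasible set `S` misses `J* ∪ T*`, it must meet the interior `I` of `p`, and `(S \ I) ∪ {u}`, with
`u` the end of `p` in `J*`, is no larger. It is again feasible: a path that avoids `u` can enter
and leave `I` only through the other end of `p`, so a path from a claw to a triangle avoids `I`.
-/

lemma encard_insert_sdiff_le {α : Type*} {s t : Set α} (h : (s ∩ t).Nonempty) (a : α) :
    (insert a (s \ t)).encard ≤ s.encard := by
  obtain ⟨x, hxs, hxt⟩ := h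
  calc (insert a (s \ t)).encard ≤ (s \ t).encard + 1 := Set.encard_insert_le _ _
    _ ≤ (s \ {x}).encard + 1 := by gcongr; exact Set.singleton_subset_iff.2 hxt
    _ = s.encard := Set.encard_sdiff_singleton_add_one hxs

section InducedCopies

variable {V W X : Type*} {G : SimpleGraph V} {H : SimpleGraph W} {K : SimpleGraph X}

/-- The union of the vertex sets of all induced copies of `H` in `G`. -/
def inducedCopyVerts (G : SimpleGraph V) (H : SimpleGraph W) : Set V :=
  {x | ∃ f : H ↪g G, x ∈ Set.range f}

lemma apply_mem_inducedCopyVerts (f : H ↪g G) (i : W) : f i ∈ inducedCopyVerts G H :=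
  ⟨f, i, rfl⟩

lemma exists_embedding_induce {s : Set V} (f : H ↪g G) (hf : ∀ i, f i ∈ s) :
    ∃ f' : H ↪g G.induce s, ∀ i, (f' i : V) = f i :=
  ⟨⟨⟨fun i => ⟨f i, hf i⟩, fun _ _ h => f.injective (congrArg Subtype.val h)⟩,
    f.map_rel_iff⟩, fun _ => rfl⟩

lemma containsInduced_component (hH : H.Preconnected) (f : H ↪g G) (i : W) :
    ContainsInduced (G.induce (G.connectedComponentMk (f i)).supp) H :=
  have hmem j : f j ∈ (G.connectedComponentMk (f i)).supp :=
    ConnectedComponent.sound ((hH j i).map f.toHom)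
  let ⟨f', _⟩ := exists_embedding_induce f hmem
  ⟨f'⟩

lemma forall_component_not_containsInduced_iff (hH : H.Connected) (hK : K.Connected) :
    (∀ c : G.ConnectedComponent,
      ¬ ContainsInduced (G.induce c.supp) H ∨ ¬ ContainsInduced (G.induce c.supp) K) ↔
    ∀ (f : H ↪g G) (g : K ↪g G) (i : W) (j : X), ¬ G.Reachable (f i) (g j) := by
  constructor
  · intro h f g i j hij
    rcases h (G.connectedComponentMk (f i)) with hc | hc
    · exact hc (containsInduced_component hH.preconnected f i)
    · rw [ConnectedComponent.sound hij] at hc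
      exact hc (containsInduced_component hK.preconnected g j)
  · intro h c
    by_contra! ⟨⟨f⟩, ⟨g⟩⟩
    obtain ⟨i⟩ := hH.nonempty
    obtain ⟨j⟩ := hK.nonempty
    exact h ((Embedding.induce _).comp f) ((Embedding.induce _).comp g) i j
      (ConnectedComponent.exact ((f i).2.trans (g j).2.symm))

lemma reachable_induce_iff {s : Set V} {x y : s} :
    (G.induce s).Reachable x y ↔ ∃ p : G.Walk x y, ∀ z ∈ p.support, z ∈ s := by
  constructor
  · rintro ⟨p⟩
    refine ⟨p.map (Embedding.induce s).toHom, fun z hz => ?_⟩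
    obtain ⟨z', -, rfl⟩ := List.mem_map.1 (Walk.support_map _ p ▸ hz)
    exact z'.2
  · rintro ⟨p, hp⟩
    exact ⟨p.induce s hp⟩

end InducedCopies

section ClawTriangle

variable {V : Type*} {G : SimpleGraph V}

lemma clawGraph_eq_starGraph : clawGraph = starGraph 0 := by
  ext i j
  fin_cases i <;> fin_cases j <;> simp [clawGraph]

lemma connected_clawGraph : clawGraph.Connected :=
  clawGraph_eq_starGraph ▸ connected_starGraph 0

lemma connected_triangleGraph : triangleGraph.Connected :=
  connected_top

lemma mem_inducedCopyVerts_triangleGraph {a b c : V} (hab : G.Adj a b) (hac : G.Adj a c)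
    (hbc : G.Adj b c) : a ∈ inducedCopyVerts G triangleGraph := by
  have hadj i j : G.Adj (![a, b, c] i) (![a, b, c] j) ↔ triangleGraph.Adj i j := by
    fin_cases i <;> fin_cases j <;>
      simp [triangleGraph, hab, hac, hbc, hab.symm, hac.symm, hbc.symm]
  have hinj : Function.Injective ![a, b, c] := by
    intro i j hij
    fin_cases i <;> fin_cases j <;> simp_all [hab.ne, hac.ne, hbc.ne]
  exact ⟨⟨⟨_, hinj⟩, hadj _ _⟩, 0, rfl⟩

lemma mem_inducedCopyVerts_clawGraph {a b c d : V} (hab : G.Adj a b) (hac : G.Adj a c)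
    (had : G.Adj a d) (hbc : b ≠ c) (hbd : b ≠ d) (hcd : c ≠ d) (hbc' : ¬ G.Adj b c)
    (hbd' : ¬ G.Adj b d) (hcd' : ¬ G.Adj c d) : a ∈ inducedCopyVerts G clawGraph := by
  have hadj i j : G.Adj (![a, b, c, d] i) (![a, b, c, d] j) ↔ clawGraph.Adj i j := by
    fin_cases i <;> fin_cases j <;>
      simp [clawGraph, hab, hac, had, hab.symm, hac.symm, had.symm, hbc', hbd', hcd',
        G.adj_comm c b, G.adj_comm d]
  have hinj : Function.Injective ![a, b, c, d] := by
    intro i j hij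
    fin_cases i <;> fin_cases j <;> simp_all [hab.ne, hac.ne, had.ne]
  exact ⟨⟨⟨_, hinj⟩, hadj _ _⟩, 0, rfl⟩

lemma eq_or_eq_of_adj_of_notMem_inducedCopyVerts {x y a b : V}
    (hclaw : x ∉ inducedCopyVerts G clawGraph) (htriangle : x ∉ inducedCopyVerts G triangleGraph)
    (hxa : G.Adj x a) (hxb : G.Adj x b) (hab : a ≠ b) (hxy : G.Adj x y) : y = a ∨ y = b := by
  have hindep {c d : V} (hc : G.Adj x c) (hd : G.Adj x d) : ¬ G.Adj c d :=
    fun hcd => htriangle (mem_inducedCopyVerts_triangleGraph hc hd hcd)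
  by_contra! ⟨hya, hyb⟩
  exact hclaw (mem_inducedCopyVerts_clawGraph hxy hxa hxb hya hyb hab
    (hindep hxy hxa) (hindep hxy hxb) (hindep hxa hxb))

end ClawTriangle

section Walks

variable {V : Type*} {G : SimpleGraph V} {u v x : V} {A B : Set V}

/-- The interior of a walk: the vertices on it other than its two ends. -/
def walkInterior (p : G.Walk u v) : Set V :=
  {x | x ∈ p.support ∧ x ≠ u ∧ x ≠ v}

lemma exists_two_neighbors_of_mem_walkInterior {p : G.Walk u v} (hp : p.IsPath)
    (hx : x ∈ walkInterior p) :
    ∃ a ∈ p.support, ∃ b ∈ p.support, a ≠ b ∧ G.Adj x a ∧ G.Adj x b := by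
  obtain ⟨hxp, hxu, hxv⟩ := hx
  obtain ⟨q, r, rfl⟩ := p.mem_support_iff_exists_append.1 hxp
  have hpred : G.Adj q.penultimate x := q.adj_penultimate (Walk.not_nil_of_ne hxu.symm)
  have hsucc : G.Adj x r.snd := r.adj_snd (Walk.not_nil_of_ne hxv)
  have hq : q.penultimate ∈ q.support := q.getVert_mem_support _
  have hr : r.snd ∈ r.support := r.getVert_mem_support _
  exact ⟨q.penultimate, (Walk.mem_support_append_iff q r).2 (.inl hq),
    r.snd, (Walk.mem_support_append_iff q r).2 (.inr hr),
    hp.ne_of_mem_support_of_append hsucc.ne' hq hr, hpred.symm, hsucc⟩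

lemma notMem_of_mem_support_of_unique_boundary {p : G.Walk u v} (hp : p.IsPath) {I : Set V} {b : V}
    (hu : u ∉ I) (hv : v ∉ I)
    (hb : ∀ x ∈ p.support, x ∉ I → ∀ y ∈ I, G.Adj x y → x = b) : ∀ z ∈ p.support, z ∉ I := by
  intro z hzp hzI
  obtain ⟨q, r, rfl⟩ := p.mem_support_iff_exists_append.1 hzp
  obtain ⟨d, hd, hd₁, hd₂⟩ := q.exists_boundary_dart Iᶜ hu (not_not.2 hzI)
  obtain ⟨e, he, he₁, he₂⟩ := r.exists_boundary_dart I hzI hv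
  have hdq : d.fst ∈ q.support := q.dart_fst_mem_support_of_mem_darts hd
  have her : e.snd ∈ r.support := r.dart_snd_mem_support_of_mem_darts he
  have hdb : d.fst = b :=
    hb _ ((Walk.mem_support_append_iff q r).2 (.inl hdq)) hd₁ _ (not_not.1 hd₂) d.adj
  have heb : e.snd = b :=
    hb _ ((Walk.mem_support_append_iff q r).2 (.inr her)) he₂ _ he₁ e.adj.symm
  have hez : e.snd ≠ z := fun h => he₂ (h ▸ hzI)
  exact hp.ne_of_mem_support_of_append hez hdq her (hdb.trans heb.symm)

/-- The walk `p` starts in `A`, ends in `B`, and is shortest among all such walks. -/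
structure IsShortestBetween (p : G.Walk u v) (A B : Set V) : Prop where
  start_mem : u ∈ A
  end_mem : v ∈ B
  length_le : ∀ ⦃a b : V⦄, a ∈ A → b ∈ B → ∀ q : G.Walk a b, p.length ≤ q.length

lemma IsShortestBetween.isPath {p : G.Walk u v} (hp : IsShortestBetween p A B) : p.IsPath := by
  classical
  rw [← p.bypass_eq_self_of_length_le_length_bypass
    (hp.length_le hp.start_mem hp.end_mem p.bypass)]
  exact p.bypass_isPath

lemma IsShortestBetween.notMem_of_mem_walkInterior {p : G.Walk u v}
    (hp : IsShortestBetween p A B) (hx : x ∈ walkInterior p) : x ∉ A ∧ x ∉ B := by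
  classical
  obtain ⟨hxp, hxu, hxv⟩ := hx
  exact ⟨fun hxA => (hp.length_le hxA hp.end_mem (p.dropUntil x hxp)).not_gt
      (Walk.length_dropUntil_lt_length hxp hxu),
    fun hxB => (hp.length_le hp.start_mem hxB (p.takeUntil x hxp)).not_gt
      (Walk.length_takeUntil_lt_length hxp hxv)⟩

lemma mem_support_of_adj_walkInterior {p : G.Walk u v} {y : V}
    (hp : IsShortestBetween p (inducedCopyVerts G clawGraph) (inducedCopyVerts G triangleGraph))
    (hx : x ∈ walkInterior p) (hxy : G.Adj x y) : y ∈ p.support := by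
  obtain ⟨hclaw, htriangle⟩ := hp.notMem_of_mem_walkInterior hx
  obtain ⟨a, ha, b, hb, hab, hxa, hxb⟩ := exists_two_neighbors_of_mem_walkInterior hp.isPath hx
  rcases eq_or_eq_of_adj_of_notMem_inducedCopyVerts hclaw htriangle hxa hxb hab hxy with rfl | rfl
  exacts [ha, hb]

end Walks

section SetDistance

variable {V : Type*} {G : SimpleGraph V} {P Q : Set V}

lemma eSetDist_le_length {x y : V} (hx : x ∈ P) (hy : y ∈ Q) (p : G.Walk x y) :
    eSetDist G P Q ≤ p.length :=
  ((iInf₂_le x hx).trans (iInf₂_le y hy)).trans p.edist_le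

lemma exists_walk_length_eq_eSetDist (h : eSetDist G P Q < ⊤) :
    ∃ u ∈ P, ∃ v ∈ Q, ∃ p : G.Walk u v, (p.length : ℕ∞) = eSetDist G P Q := by
  have hlt : eSetDist G P Q < eSetDist G P Q + 1 := (ENat.lt_add_one_iff h.ne).2 le_rfl
  conv_lhs at hlt => rw [eSetDist]
  simp only [iInf_lt_iff] at hlt
  obtain ⟨u, hu, v, hv, huv⟩ := hlt
  have hle : G.edist u v ≤ eSetDist G P Q := (ENat.lt_add_one_iff h.ne).1 huv
  obtain ⟨p, hp⟩ := exists_walk_of_edist_ne_top (hle.trans_lt h).ne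
  exact ⟨u, hu, v, hv, p, (hp.trans_le hle).antisymm (eSetDist_le_length hu hv p)⟩

lemma mem_inducedCopyVerts_of_iso {W : Type*} {H : SimpleGraph W} (e : H ≃g G.induce P) {x : V}
    (hx : x ∈ P) : x ∈ inducedCopyVerts G H :=
  ⟨(Embedding.induce P).comp e.toEmbedding, e.symm ⟨x, hx⟩, by simp⟩

lemma exists_isShortestBetween_of_closest {W X : Type*} {H : SimpleGraph W} {K : SimpleGraph X}
    (hP : Nonempty (H ≃g G.induce P)) (hQ : Nonempty (K ≃g G.induce Q))
    (hfin : eSetDist G P Q < ⊤)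
    (hclosest : ∀ P' Q' : Set V, Nonempty (H ≃g G.induce P') → Nonempty (K ≃g G.induce Q') →
      eSetDist G P' Q' < ⊤ → eSetDist G P Q ≤ eSetDist G P' Q') :
    ∃ u ∈ P, ∃ v ∈ Q, ∃ p : G.Walk u v,
      IsShortestBetween p (inducedCopyVerts G H) (inducedCopyVerts G K) := by
  obtain ⟨u, hu, v, hv, p, hp⟩ := exists_walk_length_eq_eSetDist hfin
  refine ⟨u, hu, v, hv, p, mem_inducedCopyVerts_of_iso hP.some hu,
    mem_inducedCopyVerts_of_iso hQ.some hv, ?_⟩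
  rintro a b ⟨f, ha⟩ ⟨g, hb⟩ q
  have hle : eSetDist G (Set.range f) (Set.range g) ≤ q.length := eSetDist_le_length ha hb q
  have hpq : (p.length : ℕ∞) ≤ q.length := calc
    (p.length : ℕ∞) = eSetDist G P Q := hp
    _ ≤ eSetDist G (Set.range f) (Set.range g) :=
      hclosest _ _ ⟨f.isoInduceRange⟩ ⟨g.isoInduceRange⟩ (hle.trans_lt (ENat.natCast_lt_top _))
    _ ≤ q.length := hle
  exact_mod_cast hpq

end SetDistance

section Feasible

variable {V : Type} {G : SimpleGraph V} {S : Set V} {u v : V}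

lemma feasible_iff : Feasible G S ↔
    ∀ (f : clawGraph ↪g G) (g : triangleGraph ↪g G), (∀ i, f i ∉ S) → (∀ j, g j ∉ S) →
      ∀ i j (p : G.Walk (f i) (g j)), ∃ z ∈ p.support, z ∈ S := by
  rw [Feasible, forall_component_not_containsInduced_iff connected_clawGraph
    connected_triangleGraph]
  constructor
  · intro h f g hf hg i j p
    by_contra! hp
    obtain ⟨f', hf'⟩ := exists_embedding_induce (s := Sᶜ) f hf
    obtain ⟨g', hg'⟩ := exists_embedding_induce (s := Sᶜ) g hg
    refine h f' g' i j (reachable_induce_iff.2 ?_)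
    rw [hf', hg']
    exact ⟨p, hp⟩
  · intro h f g i j hij
    obtain ⟨p, hp⟩ := reachable_induce_iff.1 hij
    obtain ⟨z, hzp, hzS⟩ := h ((Embedding.induce _).comp f) ((Embedding.induce _).comp g)
      (fun i => (f i).2) (fun j => (g j).2) i j p
    exact hp z hzp hzS

lemma exists_feasible_encard_le (G : SimpleGraph V) :
    ∃ S : Set V, Feasible G S ∧ ∀ S' : Set V, Feasible G S' → S.encard ≤ S'.encard := by
  have huniv : Feasible G Set.univ :=
    feasible_iff.2 fun f _ hf => absurd (Set.mem_univ (f 0)) (hf 0)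
  obtain ⟨⟨S, hS⟩, hmin⟩ :=
    @ENat.exists_eq_iInf _ ⟨_, huniv⟩ fun S : {S : Set V // Feasible G S} => S.1.encard
  exact ⟨S, hS, fun S' hS' => hmin.trans_le (iInf_le _ (⟨S', hS'⟩ : {S // Feasible G S}))⟩

lemma Feasible.insert_sdiff {I : Set V} (hS : Feasible G S)
    (hclaw : Disjoint I (inducedCopyVerts G clawGraph))
    (htriangle : Disjoint I (inducedCopyVerts G triangleGraph))
    (hI : ∀ x ∈ I, ∀ y ∉ I, G.Adj x y → y = u ∨ y = v) : Feasible G (insert u (S \ I)) := by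
  classical
  refine feasible_iff.2 fun f g hf hg i j p => ?_
  by_contra! hp
  have hfI k : f k ∉ I := hclaw.notMem_of_mem_right (apply_mem_inducedCopyVerts f k)
  have hgI k : g k ∉ I := htriangle.notMem_of_mem_right (apply_mem_inducedCopyVerts g k)
  have hnotMem {x : V} (hx : x ∉ insert u (S \ I)) (hxI : x ∉ I) : x ∉ S :=
    fun hxS => hx (.inr ⟨hxS, hxI⟩)
  have hbypass z (hz : z ∈ p.bypass.support) : z ∉ insert u (S \ I) :=
    hp z (p.support_bypass_subset_support hz)
  have hbypassI : ∀ z ∈ p.bypass.support, z ∉ I :=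
    notMem_of_mem_support_of_unique_boundary p.bypass_isPath (hfI i) (hgI j)
      fun x hx hxI y hy hxy => (hI y hy x hxI hxy.symm).resolve_left
        fun hxu => hbypass x hx (.inl hxu)
  obtain ⟨z, hz, hzS⟩ := feasible_iff.1 hS f g (fun k => hnotMem (hf k) (hfI k))
    (fun k => hnotMem (hg k) (hgI k)) i j p.bypass
  exact hnotMem (hbypass z hz) (hbypassI z hz) hzS

lemma Feasible.insert_sdiff_walkInterior {p : G.Walk u v} (hS : Feasible G S)
    (hp : IsShortestBetween p (inducedCopyVerts G clawGraph) (inducedCopyVerts G triangleGraph)) :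
    Feasible G (insert u (S \ walkInterior p)) := by
  refine hS.insert_sdiff (v := v)
    (Set.disjoint_left.2 fun x hx => (hp.notMem_of_mem_walkInterior hx).1)
    (Set.disjoint_left.2 fun x hx => (hp.notMem_of_mem_walkInterior hx).2) fun x hx y hy hxy => ?_
  by_contra! ⟨hyu, hyv⟩
  exact hy ⟨mem_support_of_adj_walkInterior hp hx hxy, hyu, hyv⟩

lemma Feasible.inter_walkInterior_nonempty {P Q : Set V} (hS : Feasible G S)
    (hP : Nonempty (clawGraph ≃g G.induce P)) (hQ : Nonempty (triangleGraph ≃g G.induce Q))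
    (hdisj : Disjoint S (P ∪ Q)) (hu : u ∈ P) (hv : v ∈ Q) (p : G.Walk u v) :
    (S ∩ walkInterior p).Nonempty := by
  obtain ⟨e⟩ := hP
  obtain ⟨e'⟩ := hQ
  have hPS x (hx : x ∈ P) : x ∉ S := hdisj.notMem_of_mem_right (.inl hx)
  have hQS x (hx : x ∈ Q) : x ∉ S := hdisj.notMem_of_mem_right (.inr hx)
  obtain ⟨i, hi⟩ := e.surjective ⟨u, hu⟩
  obtain ⟨j, hj⟩ := e'.surjective ⟨v, hv⟩
  obtain rfl : (e i : V) = u := congrArg Subtype.val hi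
  obtain rfl : (e' j : V) = v := congrArg Subtype.val hj
  obtain ⟨z, hzp, hzS⟩ := feasible_iff.1 hS ((Embedding.induce P).comp e.toEmbedding)
    ((Embedding.induce Q).comp e'.toEmbedding) (fun i => hPS _ (e i).2) (fun j => hQS _ (e' j).2)
    i j p
  exact ⟨z, hzS, hzp, fun h => hPS z (h ▸ hu) hzS, fun h => hQS z (h ▸ hv) hzS⟩

end Feasible

/-- Cardinalities are `encard`s because `ncard` is `0` on infinite sets. -/
theorem stmt8_general {V : Type} (G : SimpleGraph V) (Js Ts : Set V)
    (hJ : Nonempty (clawGraph ≃g G.induce Js))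
    (hT : Nonempty (triangleGraph ≃g G.induce Ts))
    (hfin : eSetDist G Js Ts < ⊤)
    (hclosest : ∀ J T : Set V, Nonempty (clawGraph ≃g G.induce J) →
      Nonempty (triangleGraph ≃g G.induce T) → eSetDist G J T < ⊤ →
      eSetDist G Js Ts ≤ eSetDist G J T) :
    ∃ S : Set V, Feasible G S ∧ (S ∩ (Js ∪ Ts)).Nonempty ∧
      ∀ S' : Set V, Feasible G S' → S.encard ≤ S'.encard := by
  obtain ⟨S, hS, hmin⟩ := exists_feasible_encard_le G
  by_cases hmeet : (S ∩ (Js ∪ Ts)).Nonempty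
  · exact ⟨S, hS, hmeet, hmin⟩
  have hdisj : Disjoint S (Js ∪ Ts) :=
    Set.disjoint_iff_inter_eq_empty.2 (Set.not_nonempty_iff_eq_empty.1 hmeet)
  obtain ⟨u, hu, v, hv, p, hp⟩ := exists_isShortestBetween_of_closest hJ hT hfin hclosest
  have hSp : (S ∩ walkInterior p).Nonempty := hS.inter_walkInterior_nonempty hJ hT hdisj hu hv p
  exact ⟨insert u (S \ walkInterior p), hS.insert_sdiff_walkInterior hp,
    ⟨u, Set.mem_insert _ _, .inl hu⟩,
    fun S' hS' => (encard_insert_sdiff_le hSp u).trans (hmin S' hS')⟩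

theorem stmt8 {V : Type} [Fintype V] (G : SimpleGraph V) (Js Ts : Set V)
    (hJ : Nonempty (clawGraph ≃g G.induce Js))
    (hT : Nonempty (triangleGraph ≃g G.induce Ts))
    (hfin : eSetDist G Js Ts < ⊤)
    (hclosest : ∀ J T : Set V, Nonempty (clawGraph ≃g G.induce J) →
      Nonempty (triangleGraph ≃g G.induce T) → eSetDist G J T < ⊤ →
      eSetDist G Js Ts ≤ eSetDist G J T) :
    ∃ S : Set V, Feasible G S ∧ (S ∩ (Js ∪ Ts)).Nonempty ∧
      ∀ S' : Set V, Feasible G S' → S.ncard ≤ S'.ncard := by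
  obtain ⟨S, hS, hmeet, hmin⟩ := stmt8_general G Js Ts hJ hT hfin hclosest
  exact ⟨S, hS, hmeet, fun S' hS' =>
    ENat.toNat_le_toNat (hmin S' hS') (Set.encard_ne_top_iff.2 S'.toFinite)⟩
end

section
/- Let G be a graph, J* ⊆ V(G) with G[J*] isomorphic to the claw K_{1,3}, and T* ⊆ V(G) with G[T*] isomorphic to the triangle K_3, such that d := d_G(J*,T*) is finite and (J*,T*) is a closest claw–triangle pair: for all J, T ⊆ V(G) with G[J] ≅ K_{1,3}, G[T] ≅ K_3 and d_G(J,T) finite, one has d ≤ d_G(J,T). Assume d ≥ 2 and let P* = x_0 x_1 ⋯ x_d be a shortest path in G with x_0 = u ∈ J* and x_d = v ∈ T*. Call Q ⊆ V(G) a forbidden set if G[Q] is isomorphic to the net, the 3-sun, or a cycle C_k with k ≥ 4, or G[Q] is connected and contains both an induced claw and an induced triangle, and Q is minimal with this property (no proper subset of Q satisfies it). Then every forbidden set Q with Q ∩ {x_1,…,x_{d−1}} ≠ ∅ contains v. -/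
open SimpleGraph

/-- The net: a triangle `{0, 1, 2}` with pendant vertices `3`, `4`, `5`
attached to `0`, `1`, `2` respectively. -/
def netGraph : SimpleGraph (Fin 6) :=
  SimpleGraph.fromEdgeSet {s(0, 1), s(1, 2), s(0, 2), s(0, 3), s(1, 4), s(2, 5)}

/-- The 3-sun: a triangle `{0, 1, 2}` together with `3` adjacent exactly to `0, 1`,
`4` adjacent exactly to `1, 2`, and `5` adjacent exactly to `2, 0`. -/
def sunGraph : SimpleGraph (Fin 6) :=
  SimpleGraph.fromEdgeSet
    {s(0, 1), s(1, 2), s(0, 2), s(3, 0), s(3, 1), s(4, 1), s(4, 2), s(5, 2), s(5, 0)}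

/-- `Q` induces a net, a 3-sun or a cycle `C_k` with `k ≥ 4`, or `G[Q]` is connected
and contains both an induced claw and an induced triangle. -/
def PITBad {V : Type} (G : SimpleGraph V) (Q : Set V) : Prop :=
  (Nonempty (netGraph ≃g G.induce Q) ∨ Nonempty (sunGraph ≃g G.induce Q) ∨
    ∃ k, 4 ≤ k ∧ Nonempty (SimpleGraph.cycleGraph k ≃g G.induce Q)) ∨
  ((G.induce Q).Connected ∧ ContainsInduced (G.induce Q) clawGraph ∧
    ContainsInduced (G.induce Q) triangleGraph)

/-- A forbidden set: a minimal vertex set satisfying `PITBad`. -/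
def PITForbidden {V : Type} (G : SimpleGraph V) (Q : Set V) : Prop :=
  PITBad G Q ∧ ∀ Q' ⊂ Q, ¬ PITBad G Q'

/-!
Suppose `v ∉ Q`. Following the path from an interior vertex in `Q`, let `x_j` be the last vertex
before it leaves `Q`. By the choice of the pair, no vertex of the path other than `v` lies in a
triangle, and none other than `u` lies in an induced claw. So `x_j` has only the neighbours
`x_{j-1}` and `x_{j+1}`: a third one would make `x_j` the centre of a claw or a vertex of a
triangle. As `x_{j+1} ∉ Q`, the vertex `x_j` is isolated or pendant in `G[Q]`, and neither it nor
its neighbour there lies in a triangle. This excludes the net, the 3-sun and the cycles. If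
instead `G[Q]` is connected with an induced claw and an induced triangle, then so is
`G[Q \ {x_j}]`, against the minimality of `Q`.
-/

/-- The vertex `x` belongs to an induced copy of `H` in `G`. Choosing a closest claw–triangle pair
keeps the interior vertices of the path from lying in an induced claw or triangle in this sense. -/
def LiesInInduced {V W : Type*} (G : SimpleGraph V) (H : SimpleGraph W) (x : V) : Prop :=
  ∃ f : H ↪g G, x ∈ Set.range f

section

variable {V W X : Type*} {G : SimpleGraph V} {H : SimpleGraph W} {K : SimpleGraph X}

theorem LiesInInduced.map {w : W} (hw : LiesInInduced H K w) (f : H ↪g G) :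
    LiesInInduced G K (f w) := by
  obtain ⟨g, x, rfl⟩ := hw
  exact ⟨f.comp g, x, rfl⟩

theorem LiesInInduced.exists_induce_iso {x : V} (hx : LiesInInduced G H x) :
    ∃ S : Set V, x ∈ S ∧ Nonempty (H ≃g G.induce S) := by
  obtain ⟨f, hf⟩ := hx
  exact ⟨Set.range f, hf, ⟨f.isoInduceRange⟩⟩

theorem ContainsInduced.induce_diff_singleton {Q : Set V} {y : V}
    (hH : ContainsInduced (G.induce Q) H) (hy : ¬ LiesInInduced G H y) :
    ContainsInduced (G.induce (Q \ {y})) H := by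
  obtain ⟨f⟩ := hH
  let g : H ↪g G := (Embedding.induce Q).comp f
  have range_subset : Set.range g ⊆ Q \ {y} := by
    rintro _ ⟨w, rfl⟩
    exact ⟨(f w).2, fun hw => hy ⟨g, w, hw⟩⟩
  exact ⟨(G.induceHomOfLE range_subset).comp g.isoInduceRange.toEmbedding⟩

theorem liesInInduced_triangleGraph {a b c : V} (hab : G.Adj a b) (hac : G.Adj a c)
    (hbc : G.Adj b c) : LiesInInduced G triangleGraph a := by
  let f : triangleGraph →g G := ⟨![a, b, c], by
    intro i j hij
    fin_cases i <;> fin_cases j <;> simp_all [triangleGraph, adj_comm]⟩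
  exact ⟨(f.toCopy f.injective_of_top_hom).topEmbedding, 0, rfl⟩

theorem liesInInduced_clawGraph {a b c e : V} (hab : G.Adj a b) (hac : G.Adj a c)
    (hae : G.Adj a e) (hbc : ¬ G.Adj b c) (hbe : ¬ G.Adj b e) (hce : ¬ G.Adj c e)
    (hbc' : b ≠ c) (hbe' : b ≠ e) (hce' : c ≠ e) : LiesInInduced G clawGraph a := by
  refine ⟨⟨⟨![a, b, c, e], ?_⟩, ?_⟩, 0, rfl⟩
  · intro i j hij
    fin_cases i <;> fin_cases j <;> simp_all [hab.ne, hac.ne, hae.ne]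
  · intro i j
    change G.Adj (![a, b, c, e] i) (![a, b, c, e] j) ↔ clawGraph.Adj i j
    fin_cases i <;> fin_cases j <;> simp_all [clawGraph, adj_comm]

theorem eq_or_eq_of_adj_of_not_liesInInduced {a b w y : V}
    (hT : ¬ LiesInInduced G triangleGraph y) (hC : ¬ LiesInInduced G clawGraph y)
    (ha : G.Adj y a) (hb : G.Adj y b) (hab : a ≠ b) (hw : G.Adj y w) : w = a ∨ w = b := by
  have not_adj {c e : V} (hc : G.Adj y c) (he : G.Adj y e) : ¬ G.Adj c e :=
    fun hce => hT (liesInInduced_triangleGraph hc he hce)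
  by_contra! hne
  exact hC (liesInInduced_clawGraph hw ha hb (not_adj hw ha) (not_adj hw hb) (not_adj ha hb)
    hne.1 hne.2 hab)

end

theorem netGraph_liesInInduced_triangleGraph_or_adj (i : Fin 6) :
    LiesInInduced netGraph triangleGraph i ∨
      ∃ j, netGraph.Adj i j ∧ LiesInInduced netGraph triangleGraph j := by
  have triangle (j : Fin 6) (hj : j < 3) : LiesInInduced netGraph triangleGraph j := by
    obtain ⟨k, l, hjk, hjl, hkl⟩ :
        ∃ k l, netGraph.Adj j k ∧ netGraph.Adj j l ∧ netGraph.Adj k l := by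
      simp only [netGraph, fromEdgeSet_adj, Set.mem_insert_iff, Set.mem_singleton_iff]
      decide +revert
    exact liesInInduced_triangleGraph hjk hjl hkl
  obtain ⟨j, hj, rfl | hij⟩ : ∃ j < 3, j = i ∨ netGraph.Adj i j := by
    simp only [netGraph, fromEdgeSet_adj, Set.mem_insert_iff, Set.mem_singleton_iff]
    decide +revert
  · exact .inl (triangle j hj)
  · exact .inr ⟨j, hij, triangle j hj⟩

theorem sunGraph_liesInInduced_triangleGraph (i : Fin 6) :
    LiesInInduced sunGraph triangleGraph i := by
  obtain ⟨j, k, hij, hik, hjk⟩ :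
      ∃ j k, sunGraph.Adj i j ∧ sunGraph.Adj i k ∧ sunGraph.Adj j k := by
    simp only [sunGraph, fromEdgeSet_adj, Set.mem_insert_iff, Set.mem_singleton_iff]
    decide +revert
  exact liesInInduced_triangleGraph hij hik hjk

theorem not_subsingleton_neighborSet_cycleGraph {k : ℕ} (hk : 3 ≤ k) (i : Fin k) :
    ¬ ((cycleGraph k).neighborSet i).Subsingleton := by
  obtain ⟨n, rfl⟩ := Nat.exists_eq_add_of_le' hk
  rw [Set.not_subsingleton_iff, ← coe_neighborFinset]
  refine Finset.one_lt_card_iff_nontrivial.1 ?_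
  rw [card_neighborFinset_eq_degree, cycleGraph_degree_three_le]
  exact one_lt_two

section

variable {V : Type*} {G : SimpleGraph V}

theorem subsingleton_neighborSet_induce {Q : Set V} (y : Q)
    (hN : (Q ∩ G.neighborSet y).Subsingleton) : ((G.induce Q).neighborSet y).Subsingleton :=
  fun a ha b hb => Subtype.ext (hN ⟨a.2, ha⟩ ⟨b.2, hb⟩)

theorem connected_induce_diff_singleton {Q : Set V} {y : V} (hQ : (G.induce Q).Connected)
    (hN : (Q ∩ G.neighborSet y).Subsingleton) (hne : (Q \ {y}).Nonempty) :
    (G.induce (Q \ {y})).Connected := by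
  have preconnected : ((G.induce Q).induce {x | x.1 ≠ y}).Preconnected := by
    refine hQ.preconnected.induce_of_degree_eq_one fun x hx => ?_
    obtain rfl : x.1 = y := not_not.1 hx
    exact subsingleton_neighborSet_induce x hN
  let flatten : (G.induce Q).induce {x | x.1 ≠ y} →g G.induce (Q \ {y}) :=
    ⟨fun x => ⟨x.1.1, x.1.2, x.2⟩, id⟩
  have := hne.to_subtype
  exact ⟨preconnected.map flatten fun x => ⟨⟨⟨x.1, x.2.1⟩, x.2.2⟩, rfl⟩⟩

end

theorem PITForbidden.notMem_of_subsingleton_inter_neighborSet {V : Type} {G : SimpleGraph V}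
    {Q : Set V} {y : V} (hQ : PITForbidden G Q) (hN : (Q ∩ G.neighborSet y).Subsingleton)
    (hT : ¬ LiesInInduced G triangleGraph y) (hC : ¬ LiesInInduced G clawGraph y)
    (hNT : ∀ w ∈ Q, G.Adj y w → ¬ LiesInInduced G triangleGraph w) : y ∉ Q := by
  intro hy
  obtain ⟨(⟨⟨φ⟩⟩ | ⟨⟨φ⟩⟩ | ⟨k, hk, ⟨φ⟩⟩) | ⟨hconn, hclaw, htri⟩, hmin⟩ := hQ
  · obtain ⟨i, hi⟩ := φ.surjective ⟨y, hy⟩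
    obtain rfl : (φ i).1 = y := congrArg Subtype.val hi
    let f : netGraph ↪g G := (Embedding.induce Q).comp φ.toEmbedding
    obtain hi | ⟨j, hij, hj⟩ := netGraph_liesInInduced_triangleGraph_or_adj i
    · exact hT (hi.map f)
    · exact hNT _ (φ j).2 (f.map_adj_iff.2 hij) (hj.map f)
  · obtain ⟨i, hi⟩ := φ.surjective ⟨y, hy⟩
    obtain rfl : (φ i).1 = y := congrArg Subtype.val hi
    exact hT ((sunGraph_liesInInduced_triangleGraph i).map
      ((Embedding.induce Q).comp φ.toEmbedding))
  · obtain ⟨i, hi⟩ := φ.surjective ⟨y, hy⟩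
    refine not_subsingleton_neighborSet_cycleGraph (by lia) i fun a ha b hb => φ.injective ?_
    have hN' := subsingleton_neighborSet_induce ⟨y, hy⟩ hN
    rw [← hi] at hN'
    exact hN' (φ.map_adj_iff.2 ha) (φ.map_adj_iff.2 hb)
  · have htri' := htri.induce_diff_singleton hT
    have hne : (Q \ {y}).Nonempty := htri'.elim fun f => ⟨f 0, (f 0).2⟩
    exact hmin _ (Set.sdiff_singleton_ssubset.2 hy)
      (.inr ⟨connected_induce_diff_singleton hconn hN hne, hclaw.induce_diff_singleton hC, htri'⟩)

section

variable {V : Type*} {G : SimpleGraph V} {S T : Set V} {u v : V} {p : G.Walk u v} {i : ℕ}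

theorem eSetDist_le_edist (hu : u ∈ S) (hv : v ∈ T) : eSetDist G S T ≤ G.edist u v :=
  iInf₂_le_of_le u hu (iInf₂_le v hv)

theorem getVert_notMem_right_of_length_le_eSetDist (hu : u ∈ S)
    (hp : (p.length : ℕ∞) ≤ eSetDist G S T) (hi : i < p.length) : p.getVert i ∉ T := by
  intro hiT
  have length_le : (p.length : ℕ∞) ≤ (p.take i).length :=
    hp.trans ((eSetDist_le_edist hu hiT).trans (p.take i).edist_le)
  rw [Nat.cast_le, Walk.take_length] at length_le
  lia

theorem getVert_notMem_left_of_length_le_eSetDist (hv : v ∈ T)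
    (hp : (p.length : ℕ∞) ≤ eSetDist G S T) (hi₀ : 0 < i) (hi : i ≤ p.length) :
    p.getVert i ∉ S := by
  intro hiS
  have length_le : (p.length : ℕ∞) ≤ (p.drop i).length :=
    hp.trans ((eSetDist_le_edist hiS hv).trans (p.drop i).edist_le)
  rw [Nat.cast_le, Walk.drop_length] at length_le
  lia

theorem exists_getVert_mem_getVert_succ_notMem (hiS : p.getVert i ∈ S) (hi : i ≤ p.length)
    (hv : v ∉ S) : ∃ j, i ≤ j ∧ j < p.length ∧ p.getVert j ∈ S ∧ p.getVert (j + 1) ∉ S := by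
  by_contra! hstep
  have mem_of_ge : ∀ j, i ≤ j → j ≤ p.length → p.getVert j ∈ S := by
    intro j hij
    induction j, hij using Nat.le_induction with
    | base => exact fun _ => hiS
    | succ j hij ih => exact fun hj => hstep j hij hj (ih (Nat.le_of_succ_le hj))
  exact hv (p.getVert_length ▸ mem_of_ge p.length hi le_rfl)

end

theorem stmt14_general {V : Type} {G : SimpleGraph V} {Js Ts : Set V}
    (hJ : Nonempty (clawGraph ≃g G.induce Js)) (hT : Nonempty (triangleGraph ≃g G.induce Ts))
    {u v : V} (hu : u ∈ Js) (hv : v ∈ Ts) {p : G.Walk u v} (hp : p.IsPath)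
    (hclosest : ∀ J T : Set V, Nonempty (clawGraph ≃g G.induce J) →
      Nonempty (triangleGraph ≃g G.induce T) → (p.length : ℕ∞) ≤ eSetDist G J T)
    {Q : Set V} (hQ : PITForbidden G Q)
    (hmeet : ∃ i, 0 < i ∧ i < p.length ∧ p.getVert i ∈ Q) : v ∈ Q := by
  by_contra hvQ
  have no_triangle {i : ℕ} (hi : i < p.length) :
      ¬ LiesInInduced G triangleGraph (p.getVert i) := fun h =>
    have ⟨T, hiT, hT⟩ := h.exists_induce_iso
    getVert_notMem_right_of_length_le_eSetDist hu (hclosest Js T hJ hT) hi hiT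
  have no_claw {i : ℕ} (hi₀ : 0 < i) (hi : i ≤ p.length) :
      ¬ LiesInInduced G clawGraph (p.getVert i) := fun h =>
    have ⟨J, hiJ, hJ⟩ := h.exists_induce_iso
    getVert_notMem_left_of_length_le_eSetDist hv (hclosest J Ts hJ hT) hi₀ hi hiJ
  obtain ⟨i, hi₀, hi, hiQ⟩ := hmeet
  obtain ⟨_ | j, hij, hj, hjQ, hnextQ⟩ := exists_getVert_mem_getVert_succ_notMem hiQ hi.le hvQ
  · lia
  have adj_prev := (p.adj_getVert_succ (Nat.lt_of_succ_lt hj)).symm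
  have prev_ne_next : p.getVert j ≠ p.getVert (j + 1 + 1) :=
    hp.getVert_injOn.ne (by grind) (by grind) (by lia)
  have eq_prev {w : V} (hw : w ∈ Q) (hadj : G.Adj (p.getVert (j + 1)) w) : w = p.getVert j :=
    (eq_or_eq_of_adj_of_not_liesInInduced (no_triangle hj) (no_claw j.succ_pos hj.le) adj_prev
      (p.adj_getVert_succ hj) prev_ne_next hadj).resolve_right fun h => hnextQ (h ▸ hw)
  exact hQ.notMem_of_subsingleton_inter_neighborSet
    (fun a ha b hb => (eq_prev ha.1 ha.2).trans (eq_prev hb.1 hb.2).symm)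
    (no_triangle hj) (no_claw j.succ_pos hj.le)
    (fun w hw hadj => eq_prev hw hadj ▸ no_triangle (Nat.lt_of_succ_lt hj)) hjQ

theorem stmt14 {V : Type} [Fintype V] (G : SimpleGraph V) (Js Ts : Set V)
    (hJ : Nonempty (clawGraph ≃g G.induce Js))
    (hT : Nonempty (triangleGraph ≃g G.induce Ts))
    (d : ℕ) (hd : eSetDist G Js Ts = (d : ℕ∞)) (hd2 : 2 ≤ d)
    (hclosest : ∀ J T : Set V, Nonempty (clawGraph ≃g G.induce J) →
      Nonempty (triangleGraph ≃g G.induce T) → eSetDist G J T < ⊤ →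
      (d : ℕ∞) ≤ eSetDist G J T)
    (u v : V) (hu : u ∈ Js) (hv : v ∈ Ts)
    (p : G.Walk u v) (hp : p.IsPath) (hlen : p.length = d)
    (Q : Set V) (hQ : PITForbidden G Q)
    (hmeet : ∃ i, 1 ≤ i ∧ i ≤ d - 1 ∧ p.getVert i ∈ Q) :
    v ∈ Q := by
  obtain ⟨i, hi₀, hi, hiQ⟩ := hmeet
  subst hlen
  exact stmt14_general hJ hT hu hv hp
    (fun J T hJ hT => not_lt.1 fun h => (hclosest J T hJ hT h.lt_top).not_gt h) hQ
    ⟨i, hi₀, by lia, hiQ⟩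
end

section
/- Let G be a graph containing no induced cycle C_j for any 5 ≤ j ≤ 10. Let J* ⊆ V(G) with G[J*] isomorphic to the long-claw or to the triangle K_3, and T* ⊆ V(G) with G[T*] isomorphic to the 4-cycle C_4, such that d := d_G(J*,T*) is finite and (J*,T*) is a closest such pair: for all J, T ⊆ V(G) with G[J] isomorphic to the long-claw or to K_3, G[T] isomorphic to C_4, and d_G(J,T) finite, one has d ≤ d_G(J,T). Assume d ≥ 2 and let P* = x_0 x_1 ⋯ x_d be a shortest path in G with x_0 = u ∈ J* and x_d = v ∈ T*. Let C be the connected component of G − (J* ∪ T*) containing x_1. Then: (a) {x_1,…,x_{d−1}} ⊆ V(C), and every vertex of V(C) \ {x_1,…,x_{d−1}} has exactly one neighbor in G, and that neighbor belongs to {x_1,…,x_{d−1}} (so C is a caterpillar with spine x_1 ⋯ x_{d−1}); (b) the only edges of G between V(C) and J* ∪ T* are {u, x_1} and {x_{d−1}, v}. -/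
open SimpleGraph

/-- The long-claw: center `0`, middle vertices `1`, `2`, `3`, and
leaves `4`, `5`, `6` with edges `0-i` and `i-(i+3)` for `i = 1, 2, 3`. -/
def longClawGraph : SimpleGraph (Fin 7) :=
  SimpleGraph.fromEdgeSet {s(0, 1), s(0, 2), s(0, 3), s(1, 4), s(2, 5), s(3, 6)}

/-!
An inner vertex of `P*` lies on no triangle and on no induced long-claw, which would be closer to
`T*` than `J*` is, and on no induced 4-cycle, which would be closer to `J*` than `T*` is; together
with the absence of `C_5, …, C_10` it lies on no induced cycle of length at most `10`.

If `z` has two neighbours `a`, `b` that are joined by a walk of length at most `8` avoiding `z`,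
then a geodesic of `G - z` from `a` to the nearest other neighbour of `z` closes up to an induced
cycle of length at most `10` through `z` and `a`. Any two vertices of `J*`, or of `T*`, are joined
inside that set by a walk of length at most `4`. Hence a walk of length at most `3` from a vertex of
`P*` to a vertex of `J* ∪ P* ∪ T*` can be replaced by one of length at most `7` inside that
union. This excludes every unwanted edge except one from a neighbour `w` of `x_i` to a vertex `y`
with no neighbour in `J* ∪ P* ∪ T*`; in that case `w y` and the two directions of the path are the
legs of an induced long-claw centred at `x_i`.
-/

section ShortWalks

variable {V : Type*} {G : SimpleGraph V} {S S' : Set V} {n m : ℕ} {a b c : V}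

/-- `a` and `b` are joined by a walk of length at most `n` all of whose vertices lie in `S`. With
`S = Set.univ` this says that the distance of `a` and `b` in `G` is at most `n`. -/
def JoinedWithin (G : SimpleGraph V) (S : Set V) (n : ℕ) (a b : V) : Prop :=
  ∃ q : G.Walk a b, q.length ≤ n ∧ ∀ w ∈ q.support, w ∈ S

namespace JoinedWithin

theorem refl (n : ℕ) (ha : a ∈ S) : JoinedWithin G S n a a :=
  ⟨.nil, by simp, by simpa using ha⟩

theorem of_adj (hab : G.Adj a b) (ha : a ∈ S) (hb : b ∈ S) : JoinedWithin G S 1 a b :=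
  ⟨hab.toWalk, by simp, by simp [ha, hb]⟩

theorem of_adj_univ (hab : G.Adj a b) : JoinedWithin G Set.univ 1 a b :=
  of_adj hab trivial trivial

theorem symm : JoinedWithin G S n a b → JoinedWithin G S n b a
  | ⟨q, hlen, hS⟩ => ⟨q.reverse, by simpa using hlen, by simpa using hS⟩

theorem trans : JoinedWithin G S n a b → JoinedWithin G S m b c → JoinedWithin G S (n + m) a c
  | ⟨q, hq, hqS⟩, ⟨r, hr, hrS⟩ => by
    refine ⟨q.append r, by simpa using Nat.add_le_add hq hr, fun w hw => ?_⟩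
    exact ((q.mem_support_append_iff r).1 hw).elim (hqS w) (hrS w)

theorem mono (hnm : n ≤ m) (hSS' : S ⊆ S') :
    JoinedWithin G S n a b → JoinedWithin G S' m a b
  | ⟨q, hlen, hS⟩ => ⟨q, hlen.trans hnm, fun w hw => hSS' (hS w hw)⟩

theorem toUniv (h : JoinedWithin G S n a b) : JoinedWithin G Set.univ n a b :=
  h.mono le_rfl (Set.subset_univ S)

theorem exists_adj (h : JoinedWithin G S n a b) (hab : a ≠ b) : ∃ c ∈ S, G.Adj a c := by
  obtain ⟨q, -, hS⟩ := h
  cases q with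
  | nil => exact absurd rfl hab
  | cons hac r => exact ⟨_, hS _ (by simp), hac⟩

theorem map_iso {W : Type*} {H : SimpleGraph W} {x y : W} (φ : H ≃g G.induce S)
    (h : JoinedWithin H Set.univ n x y) : JoinedWithin G S n (φ x) (φ y) := by
  obtain ⟨q, hlen, -⟩ := h
  let f : H →g G := (Embedding.induce S).toHom.comp φ.toHom
  refine ⟨q.map f, (q.length_map f).trans_le hlen, fun w (hw : w ∈ (q.map f).support) => ?_⟩
  rw [Walk.support_map, List.mem_map] at hw
  obtain ⟨w', -, rfl⟩ := hw
  exact (φ w').2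

end JoinedWithin

end ShortWalks

section InducedCycles

variable {V : Type*} {G : SimpleGraph V}

theorem dist_getVert_of_length_eq_dist {a b : V} {q : G.Walk a b} (hq : q.length = G.dist a b)
    {i : ℕ} (hi : i ≤ q.length) : G.dist a (q.getVert i) = i := by
  have htake := length_eq_dist_of_subwalk hq (q.isSubwalk_take i)
  rw [← htake, Walk.take_length, min_eq_left hi]

theorem adj_getVert_iff_of_length_eq_dist {a b : V} {q : G.Walk a b}
    (hq : q.length = G.dist a b) {i j : ℕ} (hi : i ≤ q.length) (hj : j ≤ q.length) :
    G.Adj (q.getVert i) (q.getVert j) ↔ i + 1 = j ∨ j + 1 = i := by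
  refine ⟨fun hadj => ?_, ?_⟩
  · have hne : i ≠ j := fun h => hadj.ne (congrArg q.getVert h)
    have hdiff := hadj.diff_dist_adj (u := a)
    rw [dist_getVert_of_length_eq_dist hq hi, dist_getVert_of_length_eq_dist hq hj] at hdiff
    lia
  · rintro (rfl | rfl)
    · exact q.adj_getVert_succ hj
    · exact (q.adj_getVert_succ hi).symm

/-- A geodesic is an induced path. -/
def geodesicEmbedding {a b : V} (q : G.Walk a b) (hq : q.length = G.dist a b) :
    pathGraph (q.length + 1) ↪g G where
  toFun i := q.getVert i
  inj' i j hij := by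
    rw [Fin.ext_iff, ← dist_getVert_of_length_eq_dist hq i.is_le,
      ← dist_getVert_of_length_eq_dist hq j.is_le]
    exact congrArg (G.dist a) hij
  map_rel_iff' {i j} :=
    (adj_getVert_iff_of_length_eq_dist hq i.is_le j.is_le).trans pathGraph_adj.symm

theorem cycleGraph_adj_zero_succ {n : ℕ} {i : Fin (n + 1)} :
    (cycleGraph (n + 2)).Adj 0 i.succ ↔ i = 0 ∨ i = Fin.last n := by
  rw [cycleGraph_adj, sub_eq_iff_eq_add', sub_eq_iff_eq_add']
  simp only [Fin.ext_iff, Fin.val_add_one]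
  grind

theorem cycleGraph_adj_succ_succ {n : ℕ} {i j : Fin (n + 1)} :
    (cycleGraph (n + 2)).Adj i.succ j.succ ↔ (pathGraph (n + 1)).Adj i j := by
  rw [cycleGraph_adj, sub_eq_iff_eq_add', sub_eq_iff_eq_add', pathGraph_adj]
  simp only [Fin.ext_iff, Fin.val_add_one]
  grind

/-- The induced cycle formed by an induced path and a vertex `z` outside it whose neighbours on the
path are its two ends; `z` is the image of `0`. -/
def closePathEmbedding {n : ℕ} {z : V} (f : pathGraph (n + 1) ↪g G) (hz : z ∉ Set.range f)
    (hadj : ∀ i, G.Adj z (f i) ↔ i = 0 ∨ i = Fin.last n) : cycleGraph (n + 2) ↪g G where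
  toFun := Fin.cons z f
  inj' := Fin.cons_injective_iff.2 ⟨hz, f.injective⟩
  map_rel_iff' {i j} := by
    cases i using Fin.cases <;> cases j using Fin.cases
    · simp
    · simpa [hadj] using cycleGraph_adj_zero_succ.symm
    · simpa [hadj, adj_comm _ _ z] using
        cycleGraph_adj_zero_succ.symm.trans (adj_comm _ _ _)
    · simpa using cycleGraph_adj_succ_succ.symm

theorem exists_geodesic_to_nearest (P : V → Prop) {a b : V} (q : G.Walk a b) (hb : P b) :
    ∃ (c : V) (r : G.Walk a c), P c ∧ r.length = G.dist a c ∧ r.length ≤ q.length ∧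
      ∀ i < r.length, ¬ P (r.getVert i) := by
  classical
  have hex : ∃ n, ∃ (c : V) (r : G.Walk a c), P c ∧ r.length = n := ⟨_, b, q, hb, rfl⟩
  obtain ⟨c, r, hc, hr⟩ := Nat.find_spec hex
  have hmin {c' : V} (r' : G.Walk a c') (hc' : P c') : r.length ≤ r'.length :=
    hr ▸ Nat.find_min' hex ⟨c', r', hc', rfl⟩
  refine ⟨c, r, hc, ?_, hmin q hb, fun i hi hPi => ?_⟩
  · obtain ⟨r', hr'⟩ := r.reachable.exists_walk_length_eq_dist
    exact le_antisymm (hr' ▸ hmin r' hc) (dist_le r)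
  · have := hmin (r.take i) hPi
    rw [Walk.take_length] at this
    lia

theorem exists_cycleGraph_embedding_of_joinedWithin {z a b : V} {k : ℕ} (hza : G.Adj z a)
    (hzb : G.Adj z b) (hab : a ≠ b) (hjoin : JoinedWithin G {z}ᶜ k a b) :
    ∃ n, 3 ≤ n ∧ n ≤ k + 2 ∧
      ∃ e : cycleGraph n ↪g G, z ∈ Set.range e ∧ a ∈ Set.range e := by
  obtain ⟨q, hqk, hqz⟩ := hjoin
  obtain ⟨c, r, ⟨hzc, hca⟩, hgeo, hlen, hfar⟩ := exists_geodesic_to_nearest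
    (fun c : ({z}ᶜ : Set V) => G.Adj z c ∧ c.1 ≠ a) (q.induce {z}ᶜ hqz) ⟨hzb, hab.symm⟩
  have hqlen : (q.induce {z}ᶜ hqz).length = q.length :=
    (Walk.length_map ..).symm.trans (congrArg Walk.length (q.map_induce hqz))
  let f : pathGraph (r.length + 1) ↪g G := (Embedding.induce _).comp (geodesicEmbedding r hgeo)
  have hf (i : Fin (r.length + 1)) : f i = r.getVert i := rfl
  have hf0 : f 0 = a := by simp [hf]
  have hpos : r.length ≠ 0 := fun h => hca (congrArg Subtype.val (Walk.eq_of_length_eq_zero h)).symm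
  have hzf : z ∉ Set.range f := by
    rintro ⟨i, hi⟩
    exact (r.getVert i).2 hi
  have hends (i : Fin (r.length + 1)) : G.Adj z (f i) ↔ i = 0 ∨ i = Fin.last r.length := by
    refine ⟨fun hzi => ?_, ?_⟩
    · by_contra! hi
      refine hfar i (Fin.val_lt_last hi.2) ⟨hzi, fun hia => hi.1 (f.injective ?_)⟩
      rw [hf0, hf, hia]
    · rintro (rfl | rfl)
      · rwa [hf0]
      · simpa [hf] using hzc
  refine ⟨r.length + 2, by lia, by lia, closePathEmbedding f hzf hends, ⟨0, rfl⟩, 1, hf0⟩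

end InducedCycles

section Anchors

variable {V : Type*} {G : SimpleGraph V} {S : Set V}

/-- What the argument uses about the two ends `J*` and `T*`: they have at least two vertices, any
two of which are joined inside the set by a walk of length at most `4`. -/
structure IsAnchor (G : SimpleGraph V) (S : Set V) : Prop where
  nontrivial : S.Nontrivial
  joined : ∀ a ∈ S, ∀ b ∈ S, JoinedWithin G S 4 a b

theorem IsAnchor.exists_adj (h : IsAnchor G S) {a : V} (ha : a ∈ S) : ∃ b ∈ S, G.Adj a b := by
  obtain ⟨b, hb, hba⟩ := h.nontrivial.exists_ne a
  exact (h.joined a ha b hb).exists_adj hba.symm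

theorem isAnchor_of_iso_of_radius_le_two {W : Type*} [Nontrivial W] {H : SimpleGraph W}
    (φ : H ≃g G.induce S) (o : W)
    (hradius : ∀ a, ∃ c, (a = c ∨ H.Adj a c) ∧ (c = o ∨ H.Adj c o)) : IsAnchor G S := by
  have hstep (a c : W) (h : a = c ∨ H.Adj a c) : JoinedWithin H Set.univ 1 a c := by
    rcases h with rfl | h
    · exact .refl 1 trivial
    · exact .of_adj_univ h
  have hcenter (a : W) : JoinedWithin H Set.univ 2 a o := by
    obtain ⟨c, hac, hco⟩ := hradius a
    exact (hstep a c hac).trans (hstep c o hco)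
  refine ⟨?_, fun a ha b hb => ?_⟩
  · rw [← Set.nontrivial_coe_sort]
    exact φ.toEquiv.symm.nontrivial
  · have hjoin := (hcenter (φ.symm ⟨a, ha⟩)).trans (hcenter (φ.symm ⟨b, hb⟩)).symm
    simpa using hjoin.map_iso φ

instance : DecidableRel longClawGraph.Adj := fun i j =>
  decidable_of_iff
    (s(i, j) ∈ ({s(0, 1), s(0, 2), s(0, 3), s(1, 4), s(2, 5), s(3, 6)} : Finset (Sym2 (Fin 7))) ∧
      i ≠ j)
    (by simp [longClawGraph])

/-- `G[J]` is a long-claw or a triangle. -/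
def IsLongClawOrTriangle (G : SimpleGraph V) (J : Set V) : Prop :=
  Nonempty (longClawGraph ≃g G.induce J) ∨ Nonempty (triangleGraph ≃g G.induce J)

theorem IsLongClawOrTriangle.isAnchor (hS : IsLongClawOrTriangle G S) : IsAnchor G S := by
  rcases hS with ⟨⟨φ⟩⟩ | ⟨⟨φ⟩⟩
  · exact isAnchor_of_iso_of_radius_le_two φ 0 (by decide)
  · exact isAnchor_of_iso_of_radius_le_two φ 0 (by unfold triangleGraph; decide)

theorem isAnchor_of_cycleGraph_four_iso (φ : cycleGraph 4 ≃g G.induce S) : IsAnchor G S :=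
  isAnchor_of_iso_of_radius_le_two φ 0 (by decide)

end Anchors

section LongClaw

variable {V : Type*} {G : SimpleGraph V}

/-- `a`, `b` are the middle vertex and the leaf of a leg of a long-claw centred at `c`. -/
structure IsLeg (G : SimpleGraph V) (c a b : V) : Prop where
  adj_middle : G.Adj c a
  adj_leaf : G.Adj a b
  not_adj_leaf : ¬ G.Adj c b

/-- No edge joins the middle vertex or the leaf of one leg to those of another. -/
structure NoEdgesBetween (G : SimpleGraph V) (a b a' b' : V) : Prop where
  middle_middle : ¬ G.Adj a a'
  middle_leaf : ¬ G.Adj a b'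
  leaf_middle : ¬ G.Adj b a'
  leaf_leaf : ¬ G.Adj b b'

theorem eq_of_longClawGraph_adj_iff :
    ∀ i j : Fin 7, (∀ k, longClawGraph.Adj i k ↔ longClawGraph.Adj j k) → i = j := by
  decide

theorem exists_longClawGraph_embedding {c a₁ a₂ a₃ b₁ b₂ b₃ : V}
    (leg₁ : IsLeg G c a₁ b₁) (leg₂ : IsLeg G c a₂ b₂) (leg₃ : IsLeg G c a₃ b₃)
    (h₁₂ : NoEdgesBetween G a₁ b₁ a₂ b₂) (h₁₃ : NoEdgesBetween G a₁ b₁ a₃ b₃)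
    (h₂₃ : NoEdgesBetween G a₂ b₂ a₃ b₃) : ∃ e : longClawGraph ↪g G, e 0 = c := by
  let f : Fin 7 → V := ![c, a₁, a₂, a₃, b₁, b₂, b₃]
  have hlt : ∀ i j, i < j → (G.Adj (f i) (f j) ↔ longClawGraph.Adj i j) := by
    obtain ⟨_, _, _⟩ := leg₁
    obtain ⟨_, _, _⟩ := leg₂
    obtain ⟨_, _, _⟩ := leg₃
    obtain ⟨_, _, _, _⟩ := h₁₂
    obtain ⟨_, _, _, _⟩ := h₁₃
    obtain ⟨_, _, _, _⟩ := h₂₃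
    intro i j hij
    fin_cases i <;> fin_cases j <;> simp_all [f, longClawGraph, adj_comm]
  have hadj (i j : Fin 7) : G.Adj (f i) (f j) ↔ longClawGraph.Adj i j := by
    rcases lt_trichotomy i j with hij | rfl | hij
    · exact hlt i j hij
    · simp
    · rw [G.adj_comm, longClawGraph.adj_comm, hlt j i hij]
  have hinj : Function.Injective f := fun i j hij =>
    eq_of_longClawGraph_adj_iff i j fun k => by rw [← hadj, ← hadj, hij]
  exact ⟨⟨⟨f, hinj⟩, hadj _ _⟩, rfl⟩

end LongClaw

section TautPaths

variable {V : Type*} {G : SimpleGraph V} {J T : Set V} {d : ℕ} {x : ℕ → V}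

/-- The inner vertices `x 1, …, x (d - 1)` of the path `x 0, …, x d`. -/
def spine (d : ℕ) (x : ℕ → V) : Set V := {w | ∃ i, 1 ≤ i ∧ i ≤ d - 1 ∧ w = x i}

theorem spine_reverse : spine d (fun i => x (d - i)) = spine d x := by
  ext w
  constructor
  · rintro ⟨i, hi, hid, rfl⟩
    exact ⟨d - i, by lia, by lia, rfl⟩
  · rintro ⟨i, hi, hid, rfl⟩
    exact ⟨d - i, by lia, by lia, by simp only [show d - (d - i) = i by lia]⟩

/-- A shortest path `x 0, …, x d` between two anchors `J` and `T` none of whose inner vertices lies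
on an induced cycle of length at most `10` or on an induced long-claw. The path is given as a
sequence, whose values beyond `d` are irrelevant. -/
structure TautPath (G : SimpleGraph V) (J T : Set V) (d : ℕ) (x : ℕ → V) : Prop where
  adj : ∀ i < d, G.Adj (x i) (x (i + 1))
  left_mem : x 0 ∈ J
  right_mem : x d ∈ T
  left_anchor : IsAnchor G J
  right_anchor : IsAnchor G T
  le_of_joined : ∀ s ∈ J, ∀ t ∈ T, ∀ n, JoinedWithin G Set.univ n s t → d ≤ n
  notMem_cycle : ∀ w ∈ spine d x, ∀ n, 3 ≤ n → n ≤ 10 →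
    ∀ e : cycleGraph n ↪g G, w ∉ Set.range e
  notMem_longClaw : ∀ w ∈ spine d x, ∀ e : longClawGraph ↪g G, w ∉ Set.range e

namespace TautPath

theorem reverse (h : TautPath G J T d x) : TautPath G T J d (fun i => x (d - i)) where
  adj i hi := by
    have hadj := h.adj (d - (i + 1)) (by lia)
    rw [show d - (i + 1) + 1 = d - i by lia] at hadj
    exact hadj.symm
  left_mem := h.right_mem
  right_mem := by simpa using h.left_mem
  left_anchor := h.right_anchor
  right_anchor := h.left_anchor
  le_of_joined t ht s hs n hts := h.le_of_joined s hs t ht n hts.symm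
  notMem_cycle := by simpa only [spine_reverse] using h.notMem_cycle
  notMem_longClaw := by simpa only [spine_reverse] using h.notMem_longClaw

theorem mem_union (h : TautPath G J T d x) {i : ℕ} (hi : i ≤ d) : x i ∈ J ∪ T ∪ spine d x := by
  rcases Nat.eq_zero_or_pos i with rfl | hpos
  · exact .inl (.inl h.left_mem)
  rcases hi.lt_or_eq with hlt | rfl
  · exact .inr ⟨i, hpos, by lia, rfl⟩
  · exact .inl (.inr h.right_mem)

theorem joined (h : TautPath G J T d x) {i j : ℕ} (hij : i ≤ j) (hj : j ≤ d) :
    JoinedWithin G (J ∪ T ∪ spine d x) (j - i) (x i) (x j) := by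
  induction j, hij using Nat.le_induction with
  | base => exact .refl _ (h.mem_union hj)
  | succ k hik ih =>
    rw [Nat.succ_sub hik]
    exact (ih (by lia)).trans
      (.of_adj (h.adj k hj) (h.mem_union (by lia)) (h.mem_union hj))

theorem le_of_joined_left (h : TautPath G J T d x) {s : V} {i n : ℕ} (hs : s ∈ J) (hi : i ≤ d)
    (hjoin : JoinedWithin G Set.univ n s (x i)) : i ≤ n := by
  have := h.le_of_joined s hs _ h.right_mem _ (hjoin.trans (h.joined hi le_rfl).toUniv)
  lia

theorem le_of_joined_right (h : TautPath G J T d x) {t : V} {i n : ℕ} (ht : t ∈ T) (hi : i ≤ d)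
    (hjoin : JoinedWithin G Set.univ n t (x i)) : d - i ≤ n :=
  h.reverse.le_of_joined_left ht (Nat.sub_le d i) (by rwa [Nat.sub_sub_self hi])

theorem le_add_of_joined (h : TautPath G J T d x) {i j n : ℕ} (hi : i ≤ d) (hj : j ≤ d)
    (hjoin : JoinedWithin G Set.univ n (x i) (x j)) : j ≤ i + n := by
  have := h.le_of_joined_left h.left_mem hj ((h.joined (Nat.zero_le i) hi).toUniv.trans hjoin)
  lia

theorem spine_subset_compl (h : TautPath G J T d x) : spine d x ⊆ (J ∪ T)ᶜ := by
  rintro _ ⟨i, hi, hid, rfl⟩ (hJ | hT)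
  · have := h.le_of_joined_left hJ (by lia) (.refl 0 trivial)
    lia
  · have := h.le_of_joined_right hT (by lia) (.refl 0 trivial)
    lia

theorem eq_of_adj_of_joined (h : TautPath G J T d x) {z a b : V}
    (hspine : z ∈ spine d x ∨ a ∈ spine d x) (hza : G.Adj z a) (hzb : G.Adj z b)
    (hjoin : JoinedWithin G {z}ᶜ 8 a b) : a = b := by
  by_contra hab
  obtain ⟨n, hn, hn', e, hze, hae⟩ :=
    exists_cycleGraph_embedding_of_joinedWithin hza hzb hab hjoin
  rcases hspine with hz | ha
  · exact h.notMem_cycle z hz n hn hn' e hze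
  · exact h.notMem_cycle a ha n hn hn' e hae

theorem eq_left_of_adj (h : TautPath G J T d x) {i : ℕ} {y : V} (hi : 1 ≤ i) (hid : i ≤ d - 1)
    (hy : y ∈ J) (hadj : G.Adj (x i) y) : i = 1 ∧ y = x 0 := by
  have hi_le := h.le_of_joined_left hy (by lia) (.of_adj_univ hadj.symm)
  obtain rfl : i = 1 := by lia
  have hmem : x 1 ∈ spine d x := ⟨1, hi, hid, rfl⟩
  have hJ : J ⊆ {x 1}ᶜ := fun w hw hwx => h.spine_subset_compl hmem (.inl (hwx ▸ hw))
  refine ⟨rfl, (h.eq_of_adj_of_joined (.inl hmem) (h.adj 0 (by lia)).symm hadj ?_).symm⟩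
  exact (h.left_anchor.joined _ h.left_mem y hy).mono (by lia) hJ

theorem eq_right_of_adj (h : TautPath G J T d x) {i : ℕ} {y : V} (hi : 1 ≤ i) (hid : i ≤ d - 1)
    (hy : y ∈ T) (hadj : G.Adj (x i) y) : i = d - 1 ∧ y = x d := by
  have hleft := h.reverse.eq_left_of_adj (i := d - i) (by lia) (by lia) hy
    (by rwa [show d - (d - i) = i by lia])
  exact ⟨by lia, hleft.2⟩

theorem joined_of_joined_left (h : TautPath G J T d x) {i k : ℕ} {y : V} (hi : i ≤ d) (hy : y ∈ J)
    (hjoin : JoinedWithin G Set.univ k (x i) y) :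
    JoinedWithin G (J ∪ T ∪ spine d x) (k + 4) (x i) y := by
  have hik := h.le_of_joined_left hy hi hjoin.symm
  have hJ : J ⊆ J ∪ T ∪ spine d x := fun _ hw => .inl (.inl hw)
  have hanchor := (h.left_anchor.joined _ h.left_mem y hy).mono le_rfl hJ
  exact ((h.joined (Nat.zero_le i) hi).symm.trans hanchor).mono (by lia) subset_rfl

theorem joined_of_joined_right (h : TautPath G J T d x) {i k : ℕ} {y : V} (hi : i ≤ d)
    (hy : y ∈ T) (hjoin : JoinedWithin G Set.univ k (x i) y) :
    JoinedWithin G (J ∪ T ∪ spine d x) (k + 4) (x i) y := by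
  have hrev := h.reverse.joined_of_joined_left (i := d - i) (k := k) (Nat.sub_le d i) hy
    (by rwa [Nat.sub_sub_self hi])
  rwa [Nat.sub_sub_self hi, spine_reverse, Set.union_comm T J] at hrev

theorem joined_of_joined_univ (h : TautPath G J T d x) {i k : ℕ} {y : V} (hi : i ≤ d)
    (hy : y ∈ J ∪ T ∪ spine d x) (hjoin : JoinedWithin G Set.univ k (x i) y) :
    JoinedWithin G (J ∪ T ∪ spine d x) (k + 4) (x i) y := by
  rcases hy with (hJ | hT) | ⟨j, hj, hjd, rfl⟩
  · exact h.joined_of_joined_left hi hJ hjoin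
  · exact h.joined_of_joined_right hi hT hjoin
  · have hij := h.le_add_of_joined hi (by lia) hjoin
    have hji := h.le_add_of_joined (by lia) hi hjoin.symm
    rcases le_total i j with hle | hle
    · exact (h.joined hle (by lia)).mono (by lia) subset_rfl
    · exact (h.joined hle hi).symm.mono (by lia) subset_rfl

theorem eq_of_adj_of_mem (h : TautPath G J T d x) {i : ℕ} {w y : V} (hi : 1 ≤ i)
    (hid : i ≤ d - 1) (hw : w ∉ J ∪ T ∪ spine d x) (hwx : G.Adj w (x i))
    (hy : y ∈ J ∪ T ∪ spine d x) (hwy : G.Adj w y) : y = x i := by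
  have hxy : JoinedWithin G Set.univ 2 (x i) y :=
    (JoinedWithin.of_adj_univ hwx.symm).trans (.of_adj_univ hwy)
  have havoid : J ∪ T ∪ spine d x ⊆ {w}ᶜ := fun _ hv hvw => hw (hvw ▸ hv)
  exact (h.eq_of_adj_of_joined (.inr ⟨i, hi, hid, rfl⟩) hwx hwy
    ((h.joined_of_joined_univ (by lia) hy hxy).mono (by lia) havoid)).symm

theorem not_adj_of_adj_pendant (h : TautPath G J T d x) {i : ℕ} {w y t : V} (hi : 1 ≤ i)
    (hid : i ≤ d - 1) (hw : w ∉ J ∪ T ∪ spine d x) (hwx : G.Adj w (x i))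
    (hy : y ∉ J ∪ T ∪ spine d x) (hwy : G.Adj w y) (ht : t ∈ J ∪ T ∪ spine d x) :
    ¬ G.Adj y t := by
  intro hyt
  have hxt : JoinedWithin G Set.univ 3 (x i) t :=
    ((JoinedWithin.of_adj_univ hwx.symm).trans (.of_adj_univ hwy)).trans
      (.of_adj_univ hyt)
  have havoid : J ∪ T ∪ spine d x ⊆ {w}ᶜ := fun _ hv hvw => hw (hvw ▸ hv)
  have hxy : JoinedWithin G {w}ᶜ 8 (x i) y :=
    ((h.joined_of_joined_univ (by lia) ht hxt).mono le_rfl havoid).trans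
      (.of_adj hyt.symm (havoid ht) hwy.ne')
  have heq := h.eq_of_adj_of_joined (.inr ⟨i, hi, hid, rfl⟩) hwx hwy hxy
  exact hy (heq ▸ h.mem_union (by lia))

theorem exists_isLeg_left (h : TautPath G J T d x) {i : ℕ} (hid : i + 1 ≤ d - 1) :
    ∃ p ∈ J ∪ T ∪ spine d x, IsLeg G (x (i + 1)) (x i) p ∧
      ∃ s ∈ J, JoinedWithin G Set.univ i s p := by
  cases i with
  | zero =>
    obtain ⟨p, hp, hadj⟩ := h.left_anchor.exists_adj h.left_mem
    refine ⟨p, .inl (.inl hp), ⟨(h.adj 0 (by lia)).symm, hadj, fun hxp => ?_⟩, p, hp,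
      .refl 0 trivial⟩
    exact hadj.ne (h.eq_left_of_adj le_rfl hid hp hxp).2.symm
  | succ i =>
    refine ⟨x i, h.mem_union (by lia),
      ⟨(h.adj (i + 1) (by lia)).symm, (h.adj i (by lia)).symm, fun hxp => ?_⟩, x 0, h.left_mem,
      (h.joined (Nat.zero_le i) (by lia)).toUniv.mono (by lia) subset_rfl⟩
    have := h.le_add_of_joined (by lia) (by lia) (.of_adj_univ hxp.symm)
    lia

theorem exists_isLeg_right (h : TautPath G J T d x) {i : ℕ} (hid : i + 1 ≤ d - 1) :
    ∃ q ∈ J ∪ T ∪ spine d x, IsLeg G (x (i + 1)) (x (i + 2)) q ∧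
      ∃ t ∈ T, JoinedWithin G Set.univ (d - (i + 2)) t q := by
  have hleg := h.reverse.exists_isLeg_left (i := d - (i + 2)) (by lia)
  rwa [spine_reverse, Set.union_comm T J, show d - (d - (i + 2) + 1) = i + 1 by lia,
    show d - (d - (i + 2)) = i + 2 by lia] at hleg

theorem not_adj_of_joined (h : TautPath G J T d x) {s t a b : V} {m n : ℕ} (hs : s ∈ J)
    (ht : t ∈ T) (hsa : JoinedWithin G Set.univ m s a) (htb : JoinedWithin G Set.univ n t b)
    (hlt : m + n + 1 < d) : ¬ G.Adj a b := by
  intro hab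
  have := h.le_of_joined s hs t ht _ ((hsa.trans (.of_adj_univ hab)).trans htb.symm)
  lia

theorem noEdgesBetween_legs (h : TautPath G J T d x) {i : ℕ} {s t p q : V} (hid : i + 1 ≤ d - 1)
    (hs : s ∈ J) (ht : t ∈ T) (hsp : JoinedWithin G Set.univ i s p)
    (htq : JoinedWithin G Set.univ (d - (i + 2)) t q) :
    NoEdgesBetween G (x i) p (x (i + 2)) q := by
  have hleft := (h.joined (Nat.zero_le i) (by lia)).toUniv
  have hright := (h.joined (i := i + 2) (by lia) le_rfl).toUniv.symm
  exact ⟨h.not_adj_of_joined h.left_mem h.right_mem hleft hright (by lia),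
    h.not_adj_of_joined h.left_mem ht hleft htq (by lia),
    h.not_adj_of_joined hs h.right_mem hsp hright (by lia),
    h.not_adj_of_joined hs ht hsp htq (by lia)⟩

theorem not_adj_of_notMem (h : TautPath G J T d x) {i : ℕ} {w y : V} (hi : 1 ≤ i)
    (hid : i ≤ d - 1) (hw : w ∉ J ∪ T ∪ spine d x) (hwx : G.Adj w (x i))
    (hy : y ∉ J ∪ T ∪ spine d x) : ¬ G.Adj w y := by
  intro hwy
  obtain ⟨i, rfl⟩ : ∃ k, i = k + 1 := ⟨i - 1, by lia⟩
  obtain ⟨p, hp, hleft, s, hs, hsp⟩ := h.exists_isLeg_left hid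
  obtain ⟨q, hq, hright, t, ht, htq⟩ := h.exists_isLeg_right hid
  have hw_far {v : V} (hv : v ∈ J ∪ T ∪ spine d x) (hne : v ≠ x (i + 1)) : ¬ G.Adj v w :=
    fun hvw => hne (h.eq_of_adj_of_mem hi hid hw hwx hv hvw.symm)
  have hy_far {v : V} (hv : v ∈ J ∪ T ∪ spine d x) : ¬ G.Adj v y :=
    fun hvy => h.not_adj_of_adj_pendant hi hid hw hwx hy hwy hv hvy.symm
  have hpx : p ≠ x (i + 1) := by
    rintro rfl
    have := h.le_of_joined_left hs (by lia) hsp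
    lia
  have hqx : q ≠ x (i + 1) := by
    rintro rfl
    have := h.le_of_joined_right ht (by lia) htq
    lia
  have hi_mem := h.mem_union (i := i) (by lia)
  have hi_mem' := h.mem_union (i := i + 2) (by lia)
  obtain ⟨e, he⟩ := exists_longClawGraph_embedding hleft hright
    ⟨hwx.symm, hwy, hy_far (h.mem_union (by lia))⟩
    (h.noEdgesBetween_legs hid hs ht hsp htq)
    ⟨hw_far hi_mem hleft.adj_middle.ne', hy_far hi_mem, hw_far hp hpx, hy_far hp⟩
    ⟨hw_far hi_mem' hright.adj_middle.ne', hy_far hi_mem', hw_far hq hqx, hy_far hq⟩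
  exact h.notMem_longClaw _ ⟨i + 1, hi, hid, rfl⟩ e ⟨0, he⟩

theorem eq_of_adj_of_notMem (h : TautPath G J T d x) {i : ℕ} {w y : V} (hi : 1 ≤ i)
    (hid : i ≤ d - 1) (hw : w ∉ J ∪ T ∪ spine d x) (hwx : G.Adj w (x i)) (hwy : G.Adj w y) :
    y = x i := by
  by_cases hy : y ∈ J ∪ T ∪ spine d x
  · exact h.eq_of_adj_of_mem hi hid hw hwx hy hwy
  · exact absurd hwy (h.not_adj_of_notMem hi hid hw hwx hy)

theorem spine_subset_supp (h : TautPath G J T d x) (hx1 : x 1 ∈ (J ∪ T)ᶜ) :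
    spine d x ⊆ Subtype.val '' ((G.induce (J ∪ T)ᶜ).connectedComponentMk ⟨x 1, hx1⟩).supp := by
  rintro w ⟨i, hi, hid, rfl⟩
  refine ⟨⟨x i, h.spine_subset_compl ⟨i, hi, hid, rfl⟩⟩, ?_, rfl⟩
  rw [ConnectedComponent.mem_supp_iff, ConnectedComponent.eq]
  induction i, hi using Nat.le_induction with
  | base => exact .refl _
  | succ k hk ih =>
    have hadj : (G.induce (J ∪ T)ᶜ).Adj ⟨x (k + 1), h.spine_subset_compl ⟨k + 1, by lia, hid, rfl⟩⟩
        ⟨x k, h.spine_subset_compl ⟨k, hk, by lia, rfl⟩⟩ := (h.adj k (by lia)).symm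
    exact hadj.reachable.trans (ih (by lia))

theorem mem_spine_or_adj_of_adj (h : TautPath G J T d x) {a b : V} (ha : a ∉ J ∪ T)
    (hab : G.Adj a b) (hspine : a ∈ spine d x ∨ ∃ c ∈ spine d x, G.Adj a c) :
    b ∈ spine d x ∨ ∃ c ∈ spine d x, G.Adj b c := by
  by_cases ha_spine : a ∈ spine d x
  · exact .inr ⟨a, ha_spine, hab.symm⟩
  · obtain ⟨_, ⟨i, hi, hid, rfl⟩, hadj⟩ := hspine.resolve_left ha_spine
    exact .inl ⟨i, hi, hid, h.eq_of_adj_of_notMem hi hid (not_or.2 ⟨ha, ha_spine⟩) hadj hab⟩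

theorem mem_spine_or_adj_of_mem_supp (h : TautPath G J T d x) (hd : 2 ≤ d)
    (hx1 : x 1 ∈ (J ∪ T)ᶜ) {w : ((J ∪ T)ᶜ : Set V)}
    (hw : w ∈ ((G.induce (J ∪ T)ᶜ).connectedComponentMk ⟨x 1, hx1⟩).supp) :
    w.1 ∈ spine d x ∨ ∃ c ∈ spine d x, G.Adj w c := by
  rw [ConnectedComponent.mem_supp_iff, ConnectedComponent.eq, reachable_comm,
    reachable_iff_reflTransGen] at hw
  induction hw with
  | refl => exact .inl ⟨1, le_rfl, by lia, rfl⟩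
  | @tail a b _ hab ih => exact h.mem_spine_or_adj_of_adj a.2 hab ih

theorem pendant_of_mem_supp (h : TautPath G J T d x) (hd : 2 ≤ d) (hx1 : x 1 ∈ (J ∪ T)ᶜ) {w : V}
    (hw : w ∈ Subtype.val '' ((G.induce (J ∪ T)ᶜ).connectedComponentMk ⟨x 1, hx1⟩).supp)
    (hw_spine : w ∉ spine d x) :
    ∃ i, 1 ≤ i ∧ i ≤ d - 1 ∧ G.Adj w (x i) ∧ ∀ y, G.Adj w y → y = x i := by
  obtain ⟨w, hw, rfl⟩ := hw
  obtain ⟨_, ⟨i, hi, hid, rfl⟩, hadj⟩ :=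
    (h.mem_spine_or_adj_of_mem_supp hd hx1 hw).resolve_left hw_spine
  exact ⟨i, hi, hid, hadj,
    fun y hwy => h.eq_of_adj_of_notMem hi hid (not_or.2 ⟨w.2, hw_spine⟩) hadj hwy⟩

theorem adj_anchor_iff_of_mem_supp (h : TautPath G J T d x) (hd : 2 ≤ d)
    (hx1 : x 1 ∈ (J ∪ T)ᶜ) {w y : V}
    (hw : w ∈ Subtype.val '' ((G.induce (J ∪ T)ᶜ).connectedComponentMk ⟨x 1, hx1⟩).supp)
    (hy : y ∈ J ∪ T) :
    G.Adj w y ↔ (w = x 1 ∧ y = x 0) ∨ (w = x (d - 1) ∧ y = x d) := by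
  refine ⟨fun hwy => ?_, ?_⟩
  · by_cases hw_spine : w ∈ spine d x
    · obtain ⟨i, hi, hid, rfl⟩ := hw_spine
      rcases hy with hyJ | hyT
      · obtain ⟨rfl, hy0⟩ := h.eq_left_of_adj hi hid hyJ hwy
        exact .inl ⟨rfl, hy0⟩
      · obtain ⟨rfl, hyd⟩ := h.eq_right_of_adj hi hid hyT hwy
        exact .inr ⟨rfl, hyd⟩
    · obtain ⟨i, hi, hid, -, huniq⟩ := h.pendant_of_mem_supp hd hx1 hw hw_spine
      exact absurd hy (h.spine_subset_compl ⟨i, hi, hid, huniq y hwy⟩)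
  · rintro (⟨rfl, rfl⟩ | ⟨rfl, rfl⟩)
    · exact (h.adj 0 (by lia)).symm
    · simpa only [show d - 1 + 1 = d by lia] using h.adj (d - 1) (by lia)

end TautPath

end TautPaths

section ClosestPairs

variable {V : Type*} {G : SimpleGraph V} {J T : Set V} {d : ℕ} {u v : V}

theorem eSetDist_le_length_s15 {s t : V} (hs : s ∈ J) (ht : t ∈ T) (q : G.Walk s t) :
    eSetDist G J T ≤ q.length :=
  (iInf₂_le s hs).trans ((iInf₂_le t ht).trans (edist_le q))

/-- `d` is a lower bound for the finite distances between a long-claw or triangle and a 4-cycle. -/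
def IsPairDistBound (G : SimpleGraph V) (d : ℕ) : Prop :=
  ∀ J T : Set V, IsLongClawOrTriangle G J → Nonempty (cycleGraph 4 ≃g G.induce T) →
    eSetDist G J T < ⊤ → (d : ℕ∞) ≤ eSetDist G J T

namespace IsPairDistBound

theorem le_length (h : IsPairDistBound G d) (hJ : IsLongClawOrTriangle G J)
    (hT : Nonempty (cycleGraph 4 ≃g G.induce T)) {s t : V} (hs : s ∈ J) (ht : t ∈ T)
    (q : G.Walk s t) : d ≤ q.length := by
  have hle := eSetDist_le_length_s15 hs ht q
  exact_mod_cast (h J T hJ hT (hle.trans_lt (ENat.natCast_lt_top _))).trans hle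

theorem getVert_notMem_of_isLongClawOrTriangle (h : IsPairDistBound G d)
    (hT : Nonempty (cycleGraph 4 ≃g G.induce T)) (hv : v ∈ T) (p : G.Walk u v)
    (hlen : p.length = d) (hJ : IsLongClawOrTriangle G J) {i : ℕ} (hi : 1 ≤ i)
    (hid : i ≤ d - 1) : p.getVert i ∉ J := by
  intro hmem
  have hle := h.le_length hJ hT hmem hv (p.drop i)
  rw [Walk.drop_length] at hle
  lia

theorem getVert_notMem_of_cycleGraph_four_iso (h : IsPairDistBound G d)
    (hJ : IsLongClawOrTriangle G J) (hu : u ∈ J) (p : G.Walk u v)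
    (hlen : p.length = d) (hT : Nonempty (cycleGraph 4 ≃g G.induce T)) {i : ℕ} (hi : 1 ≤ i)
    (hid : i ≤ d - 1) : p.getVert i ∉ T := by
  intro hmem
  have hle := h.le_length hJ hT hu hmem (p.take i)
  rw [Walk.take_length] at hle
  lia

theorem getVert_notMem_range_cycleGraph (h : IsPairDistBound G d)
    (hC : ∀ n, 5 ≤ n → n ≤ 10 → ¬ ContainsInduced G (cycleGraph n))
    (hJ : IsLongClawOrTriangle G J) (hT : Nonempty (cycleGraph 4 ≃g G.induce T)) (hu : u ∈ J)
    (hv : v ∈ T) (p : G.Walk u v) (hlen : p.length = d) {i n : ℕ} (hi : 1 ≤ i) (hid : i ≤ d - 1)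
    (hn : 3 ≤ n) (hn' : n ≤ 10) (e : cycleGraph n ↪g G) : p.getVert i ∉ Set.range e := by
  obtain rfl | rfl | hn5 : n = 3 ∨ n = 4 ∨ 5 ≤ n := by lia
  · revert e
    rw [cycleGraph_three_eq_top]
    intro e
    exact h.getVert_notMem_of_isLongClawOrTriangle hT hv p hlen (.inr ⟨e.isoInduceRange⟩) hi hid
  · exact h.getVert_notMem_of_cycleGraph_four_iso hJ hu p hlen ⟨e.isoInduceRange⟩ hi hid
  · exact absurd ⟨e⟩ (hC n hn5 hn')

theorem tautPath_getVert (h : IsPairDistBound G d)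
    (hC : ∀ n, 5 ≤ n → n ≤ 10 → ¬ ContainsInduced G (cycleGraph n))
    (hJ : IsLongClawOrTriangle G J) (hT : Nonempty (cycleGraph 4 ≃g G.induce T))
    (hu : u ∈ J) (hv : v ∈ T) (p : G.Walk u v) (hlen : p.length = d) :
    TautPath G J T d p.getVert where
  adj i hi := p.adj_getVert_succ (by lia)
  left_mem := by simpa using hu
  right_mem := by simpa [← hlen] using hv
  left_anchor := hJ.isAnchor
  right_anchor := hT.elim isAnchor_of_cycleGraph_four_iso
  le_of_joined := fun _ hs _ ht _ ⟨q, hq, _⟩ => (h.le_length hJ hT hs ht q).trans hq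
  notMem_cycle := by
    rintro _ ⟨i, hi, hid, rfl⟩ n hn hn' e
    exact h.getVert_notMem_range_cycleGraph hC hJ hT hu hv p hlen hi hid hn hn' e
  notMem_longClaw := by
    rintro _ ⟨i, hi, hid, rfl⟩ e
    exact h.getVert_notMem_of_isLongClawOrTriangle hT hv p hlen (.inl ⟨e.isoInduceRange⟩) hi hid

end IsPairDistBound

end ClosestPairs

theorem stmt15_general {V : Type*} (G : SimpleGraph V)
    (hC : ∀ j, 5 ≤ j → j ≤ 10 → ¬ ContainsInduced G (cycleGraph j)) (Js Ts : Set V)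
    (hJ : IsLongClawOrTriangle G Js) (hT : Nonempty (cycleGraph 4 ≃g G.induce Ts))
    (d : ℕ) (hd2 : 2 ≤ d) (hclosest : IsPairDistBound G d)
    (u v : V) (hu : u ∈ Js) (hv : v ∈ Ts) (p : G.Walk u v) (hlen : p.length = d)
    (hx1 : p.getVert 1 ∈ (Js ∪ Ts)ᶜ) :
    spine d p.getVert ⊆ Subtype.val ''
        ((G.induce (Js ∪ Ts)ᶜ).connectedComponentMk ⟨p.getVert 1, hx1⟩).supp ∧
    (∀ w ∈ Subtype.val ''
        ((G.induce (Js ∪ Ts)ᶜ).connectedComponentMk ⟨p.getVert 1, hx1⟩).supp,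
      w ∉ spine d p.getVert →
      ∃ i, 1 ≤ i ∧ i ≤ d - 1 ∧ G.Adj w (p.getVert i) ∧ ∀ y, G.Adj w y → y = p.getVert i) ∧
    ∀ w ∈ Subtype.val ''
        ((G.induce (Js ∪ Ts)ᶜ).connectedComponentMk ⟨p.getVert 1, hx1⟩).supp,
      ∀ y ∈ Js ∪ Ts,
        (G.Adj w y ↔ (w = p.getVert 1 ∧ y = u) ∨ (w = p.getVert (d - 1) ∧ y = v)) := by
  have htaut := hclosest.tautPath_getVert hC hJ hT hu hv p hlen
  refine ⟨htaut.spine_subset_supp hx1, fun _ => htaut.pendant_of_mem_supp hd2 hx1,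
    fun _ hw _ hy => ?_⟩
  simpa only [p.getVert_zero, ← hlen, p.getVert_length] using
    htaut.adj_anchor_iff_of_mem_supp hd2 hx1 hw hy

theorem stmt15 {V : Type} [Fintype V] (G : SimpleGraph V)
    (hC : ∀ j, 5 ≤ j → j ≤ 10 → ¬ ContainsInduced G (SimpleGraph.cycleGraph j))
    (Js Ts : Set V)
    (hJ : Nonempty (longClawGraph ≃g G.induce Js) ∨
      Nonempty (triangleGraph ≃g G.induce Js))
    (hT : Nonempty (SimpleGraph.cycleGraph 4 ≃g G.induce Ts))
    (d : ℕ) (hd : eSetDist G Js Ts = (d : ℕ∞)) (hd2 : 2 ≤ d)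
    (hclosest : ∀ J T : Set V,
      (Nonempty (longClawGraph ≃g G.induce J) ∨
        Nonempty (triangleGraph ≃g G.induce J)) →
      Nonempty (SimpleGraph.cycleGraph 4 ≃g G.induce T) → eSetDist G J T < ⊤ →
      (d : ℕ∞) ≤ eSetDist G J T)
    (u v : V) (hu : u ∈ Js) (hv : v ∈ Ts)
    (p : G.Walk u v) (hp : p.IsPath) (hlen : p.length = d)
    (hx1 : p.getVert 1 ∈ (Js ∪ Ts)ᶜ) :
    -- (a) the spine is contained in the component `C`, and every other vertex of `C`
    -- has exactly one neighbor in `G`, and that neighbor lies on the spine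
    ({w : V | ∃ i, 1 ≤ i ∧ i ≤ d - 1 ∧ w = p.getVert i} ⊆
        Subtype.val ''
          ((G.induce (Js ∪ Ts)ᶜ).connectedComponentMk ⟨p.getVert 1, hx1⟩).supp) ∧
    (∀ w ∈ Subtype.val ''
        ((G.induce (Js ∪ Ts)ᶜ).connectedComponentMk ⟨p.getVert 1, hx1⟩).supp,
      w ∉ {w : V | ∃ i, 1 ≤ i ∧ i ≤ d - 1 ∧ w = p.getVert i} →
      ∃ i, 1 ≤ i ∧ i ≤ d - 1 ∧ G.Adj w (p.getVert i) ∧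
        ∀ y, G.Adj w y → y = p.getVert i) ∧
    -- (b) the only edges of `G` between `C` and `Js ∪ Ts` are `{u, x 1}` and `{x (d-1), v}`
    (∀ w ∈ Subtype.val ''
        ((G.induce (Js ∪ Ts)ᶜ).connectedComponentMk ⟨p.getVert 1, hx1⟩).supp,
      ∀ y ∈ Js ∪ Ts,
        (G.Adj w y ↔ ((w = p.getVert 1 ∧ y = u) ∨ (w = p.getVert (d - 1) ∧ y = v)))) :=
  stmt15_general G hC Js Ts hJ hT d hd2 hclosest u v hu hv p hlen hx1
end
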